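/- Let κ, c_s, c_p > 0 and n ∈ ℕ. Then there exist ε > 0 and M > 0 such that for all 0 < r < ε, |ξ̃_{2,n}(r)| ≤ M r²; in particular ξ̃_{2,n}(r) → 0 as r → 0⁺. -/

import Mathlib

open Real Filter MeasureTheory

noncomputable def acoef (γ : ℝ) : ℕ → ℕ → ℝ
  | n, m =>
    if m = 0 then 1
    else if n < m then 0
    else if m = n then -(γ / (n : ℝ)) * acoef γ (n - 1) (n - 1)
    else (1 / (2 * γ * (m : ℝ))) *
      (4 * (((m + 1) / 2 : ℕ) : ℝ) ^ 2 * acoef γ n (m + 1)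
        - γ ^ 2 * ∑ k ∈ (Finset.Icc (m - 1) (n - 1)).attach,
            ((n - (k : ℕ) + 1 : ℕ) : ℝ) * acoef γ (k : ℕ) (m - 1))
  termination_by n m => (n, n - m)
  decreasing_by
  · apply Prod.Lex.left; omega
  · apply Prod.Lex.right; omega
  · apply Prod.Lex.left
    have hk := k.2
    simp only [Finset.mem_Icc] at hk
    omega

/-- χ_{k,n} -/
noncomputable def chiC (n : ℕ) (k : ℤ) : ℝ :=
  if k = -2 then (n : ℝ) * ((n : ℝ) - 1)
  else if k = -1 then -4 * (n : ℝ) ^ 2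
  else if k = 0 then 2 * (3 * (n : ℝ) ^ 2 + 3 * (n : ℝ) + 1)
  else if k = 1 then -4 * ((n : ℝ) + 1) ^ 2
  else if k = 2 then ((n : ℝ) + 1) * ((n : ℝ) + 2)
  else 0

/-- the sum ∑_{k=-2}^{2} χ_{k,n} f(n+k), terms with n+k<0 omitted -/
noncomputable def sumChi (n : ℕ) (f : ℕ → ℝ) : ℝ :=
  ∑ k ∈ Finset.Icc (-2 : ℤ) 2,
    if 0 ≤ (n : ℤ) + k then chiC n k * f ((n : ℤ) + k).toNat else 0

noncomputable def besselI0 (z : ℝ) : ℝ := ∑' k : ℕ, (z / 2) ^ (2 * k) / (k.factorial : ℝ) ^ 2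

noncomputable def besselI1 (z : ℝ) : ℝ :=
  ∑' k : ℕ, (z / 2) ^ (2 * k + 1) / ((k.factorial : ℝ) * ((k + 1).factorial : ℝ))

noncomputable def psiH (k : ℕ) : ℝ := ∑ j ∈ Finset.range k, (1 : ℝ) / ((j : ℝ) + 1)

noncomputable def besselS0 (z : ℝ) : ℝ :=
  ∑' k : ℕ, psiH k * (z / 2) ^ (2 * k) / (k.factorial : ℝ) ^ 2

noncomputable def besselS1 (z : ℝ) : ℝ :=
  -(1 / 2) * ∑' k : ℕ, (psiH (k + 1) + psiH k) * (z / 2) ^ (2 * k + 1) /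
    ((k.factorial : ℝ) * ((k + 1).factorial : ℝ))

noncomputable def vPol (γ : ℝ) (n : ℕ) (r : ℝ) : ℝ :=
  ∑ m ∈ Finset.range (n / 2 + 1), acoef γ n (2 * m) * r ^ (2 * m)

noncomputable def wPol (γ : ℝ) (n : ℕ) (r : ℝ) : ℝ :=
  ∑ m ∈ Finset.range ((n - 1) / 2 + 1), acoef γ n (2 * m + 1) * r ^ (2 * m + 1)

noncomputable def vTil (γ : ℝ) (n : ℕ) (r : ℝ) : ℝ :=
  2 * ∑ m ∈ Finset.Icc 1 (n / 2), (m : ℝ) * acoef γ n (2 * m) * r ^ (2 * m)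
    - γ * ∑ m ∈ Finset.range ((n - 1) / 2 + 1), acoef γ n (2 * m + 1) * r ^ (2 * m + 2)

noncomputable def wTil (γ : ℝ) (n : ℕ) (r : ℝ) : ℝ :=
  2 * ∑ m ∈ Finset.Icc 1 ((n - 1) / 2), (m : ℝ) * acoef γ n (2 * m + 1) * r ^ (2 * m + 1)
    - γ * ∑ m ∈ Finset.range (n / 2 + 1), acoef γ n (2 * m) * r ^ (2 * m + 1)

noncomputable def phiF (γ : ℝ) (n : ℕ) (r : ℝ) : ℝ :=
  -besselI0 (γ * r) * vPol γ n r + besselI1 (γ * r) * wPol γ n r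

noncomputable def phiHat (γ : ℝ) (n : ℕ) (r : ℝ) : ℝ :=
  (-(Real.eulerMascheroniConstant + Real.log (γ / 2)) * besselI0 (γ * r) + besselS0 (γ * r)) * vPol γ n r
    + (1 / (γ * r) + (Real.eulerMascheroniConstant + Real.log (γ / 2)) * besselI1 (γ * r)
        + besselS1 (γ * r)) * wPol γ n r

noncomputable def phiTil (γ : ℝ) (n : ℕ) (r : ℝ) : ℝ :=
  -besselI0 (γ * r) * vTil γ n r + besselI1 (γ * r) * wTil γ n r

noncomputable def phiHatTil (γ : ℝ) (n : ℕ) (r : ℝ) : ℝ :=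
  (-(Real.eulerMascheroniConstant + Real.log (γ / 2)) * besselI0 (γ * r) + besselS0 (γ * r)) * vTil γ n r
    + (1 / (γ * r) + (Real.eulerMascheroniConstant + Real.log (γ / 2)) * besselI1 (γ * r)
        + besselS1 (γ * r)) * wTil γ n r

noncomputable def etaF (κ cs cp : ℝ) (ℓ n : ℕ) (r : ℝ) : ℝ :=
  (-(ℓ : ℝ)) ^ (ℓ - 1) / (κ ^ 2 * r ^ 2) *
      sumChi n (fun j => phiF (κ / cs) j r - phiF (κ / cp) j r)
    + (-1 : ℝ) ^ (ℓ - 1) / cp ^ 2 * phiF (κ / cp) n r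
    + ((ℓ : ℝ) - 1) / cs ^ 2 * phiF (κ / cs) n r

noncomputable def xiF (κ cs cp : ℝ) (ℓ n : ℕ) (r : ℝ) : ℝ :=
  (-(ℓ : ℝ)) ^ (ℓ - 1) / (κ ^ 2 * r ^ 2) *
      sumChi n (fun j => phiHat (κ / cs) j r - phiHat (κ / cp) j r)
    + (-1 : ℝ) ^ (ℓ - 1) / cp ^ 2 * phiHat (κ / cp) n r
    + ((ℓ : ℝ) - 1) / cs ^ 2 * phiHat (κ / cs) n r

noncomputable def etaTil (κ cs cp : ℝ) (ℓ n : ℕ) (r : ℝ) : ℝ :=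
  (-(ℓ : ℝ)) ^ (ℓ - 1) / (κ ^ 2 * r ^ 2) *
      sumChi n (fun j => phiTil (κ / cs) j r - 2 * phiF (κ / cs) j r
        + 2 * phiF (κ / cp) j r - phiTil (κ / cp) j r)
    + (-1 : ℝ) ^ (ℓ - 1) / cp ^ 2 * phiTil (κ / cp) n r
    + ((ℓ : ℝ) - 1) / cs ^ 2 * phiTil (κ / cs) n r

noncomputable def xiTil (κ cs cp : ℝ) (ℓ n : ℕ) (r : ℝ) : ℝ :=
  (-(ℓ : ℝ)) ^ (ℓ - 1) / (κ ^ 2 * r ^ 2) *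
      sumChi n (fun j => phiHatTil (κ / cs) j r - 2 * phiHat (κ / cs) j r
        + 2 * phiHat (κ / cp) j r - phiHatTil (κ / cp) j r)
    + (-1 : ℝ) ^ (ℓ - 1) / cp ^ 2 * phiHatTil (κ / cp) n r
    + ((ℓ : ℝ) - 1) / cs ^ 2 * phiHatTil (κ / cs) n r

/-!
Write `Lγ = C + ln(γ/2)`. Then `φ̂ₙ` and `φ̂̃ₙ` are the combinations `𝒦₀ V + 𝒦₁ W` of the parts
`𝒦₀`, `𝒦₁` of the Macdonald functions `K₀(γr)`, `K₁(γr)` that are free of `ln r`, with `V` an even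
and `W` an odd polynomial. Everything is even in `r`, so it suffices to track the coefficients of
`1` and `r²`. In `φ̂̃ₙ - 2φ̂ₙ` the coefficient `a_{n,3}` cancels, and the recursion for `a_{n,2}`
leaves `2Lγ - 1 - 2a_{n,1}/γ` and `-γ²(n+1)(n+2)/8`. By homogeneity `a_{n,1}/γ` does not depend
on `γ`, so in the difference of the `γ_s` and `γ_p` terms the constant coefficient is independent
of `n`, and the other one is quadratic in `n`. The weights `χ_{k,n}` form a difference operator
which kills polynomials of degree one and sends `n²` to `4`. Hence the `χ`-sum divided by `κ²r²`
tends to `(1/c_p² - 1/c_s²)/2`; for `ℓ = 2` its prefactor is `-2`, and this cancels the limits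
`1/c_p²` and `-1/c_s²` of the remaining two terms.
-/

open Asymptotics
open scoped Topology

/-- `f r = a + b r² + O(r⁴)` as `r → 0⁺`. Nothing is said about `f` at `0`, so that functions such
as `wPol γ n r / r` may be expanded although Lean evaluates them to `0` at `r = 0`. -/
def HasEvenExpansion (f : ℝ → ℝ) (a b : ℝ) : Prop :=
  (fun r => f r - (a + b * r ^ 2)) =O[𝓝[>] 0] (fun r : ℝ => r ^ 4)

namespace HasEvenExpansion

variable {f g : ℝ → ℝ} {a b c d : ℝ}

lemma congr (hf : HasEvenExpansion f a b) (h : ∀ r, 0 < r → g r = f r) :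
    HasEvenExpansion g a b := by
  refine IsBigO.congr' hf ?_ EventuallyEq.rfl
  filter_upwards [self_mem_nhdsWithin] with r hr
  rw [h r hr]

lemma const (c : ℝ) : HasEvenExpansion (fun _ => c) c 0 :=
  (isBigO_zero _ _).congr_left fun r => by ring

lemma sq : HasEvenExpansion (fun r => r ^ 2) 0 1 :=
  (isBigO_zero _ _).congr_left fun r => by ring

lemma add (hf : HasEvenExpansion f a b) (hg : HasEvenExpansion g c d) :
    HasEvenExpansion (fun r => f r + g r) (a + c) (b + d) :=
  (IsBigO.add hf hg).congr_left fun r => by ring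

lemma sub (hf : HasEvenExpansion f a b) (hg : HasEvenExpansion g c d) :
    HasEvenExpansion (fun r => f r - g r) (a - c) (b - d) :=
  (IsBigO.sub hf hg).congr_left fun r => by ring

lemma const_mul (c : ℝ) (hf : HasEvenExpansion f a b) :
    HasEvenExpansion (fun r => c * f r) (c * a) (c * b) :=
  (IsBigO.const_mul_left hf c).congr_left fun r => by ring

lemma sum {ι : Type*} {s : Finset ι} {F : ι → ℝ → ℝ} {A B : ι → ℝ}
    (h : ∀ i ∈ s, HasEvenExpansion (F i) (A i) (B i)) :
    HasEvenExpansion (fun r => ∑ i ∈ s, F i r) (∑ i ∈ s, A i) (∑ i ∈ s, B i) := by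
  refine (IsBigO.sum h).congr_left fun r => ?_
  rw [Finset.sum_apply, Finset.sum_sub_distrib, Finset.sum_add_distrib, Finset.sum_mul]

lemma isBigO_sub (hf : HasEvenExpansion f a b) :
    (fun r => f r - a) =O[𝓝[>] 0] (fun r : ℝ => r ^ 2) :=
  have h42 : (fun r : ℝ => r ^ 4) =O[𝓝 0] (fun r => r ^ 2) :=
    (isLittleO_pow_pow (by norm_num)).isBigO
  ((IsBigO.trans hf (h42.mono nhdsWithin_le_nhds)).add
    ((isBigO_refl _ _).const_mul_left b)).congr_left fun r => by ring

lemma isBigO_one (hf : HasEvenExpansion f a b) : f =O[𝓝[>] 0] (fun _ => (1 : ℝ)) := by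
  have h20 : (fun r : ℝ => r ^ 2) =O[𝓝 0] (fun _ => (1 : ℝ)) :=
    ((continuous_pow 2).tendsto 0).isBigO_one ℝ
  exact ((hf.isBigO_sub.trans (h20.mono nhdsWithin_le_nhds)).add
    (isBigO_const_const a one_ne_zero _)).congr_left fun r => by ring

lemma mul (hf : HasEvenExpansion f a b) (hg : HasEvenExpansion g c d) :
    HasEvenExpansion (fun r => f r * g r) (a * c) (a * d + b * c) := by
  have hq : HasEvenExpansion (fun r => c + d * r ^ 2) c d :=
    (isBigO_zero _ _).congr_left fun r => by ring
  have h₁ : (fun r => f r * (g r - (c + d * r ^ 2))) =O[𝓝[>] 0] (fun r : ℝ => r ^ 4) := by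
    simpa only [one_mul] using hf.isBigO_one.mul hg
  have h₂ : (fun r => (c + d * r ^ 2) * (f r - (a + b * r ^ 2))) =O[𝓝[>] 0]
      (fun r : ℝ => r ^ 4) := by
    simpa only [one_mul] using hq.isBigO_one.mul hf
  have h₃ : (fun r : ℝ => (b * d) * r ^ 4) =O[𝓝[>] 0] (fun r : ℝ => r ^ 4) :=
    (isBigO_refl _ _).const_mul_left _
  exact ((h₁.add h₂).add h₃).congr_left fun r => by ring

lemma isBigO_div_sq_sub (hf : HasEvenExpansion f 0 b) :
    (fun r => f r / r ^ 2 - b) =O[𝓝[>] 0] (fun r : ℝ => r ^ 2) := by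
  refine ((isBigO_refl (fun r : ℝ => (r ^ 2)⁻¹) _).mul hf).congr' ?_ ?_
  · filter_upwards [self_mem_nhdsWithin] with r (hr : 0 < r)
    field_simp
    ring
  · filter_upwards [self_mem_nhdsWithin] with r (hr : 0 < r)
    field_simp

end HasEvenExpansion

lemma isBigO_tsum_mul_pow_sub {c : ℕ → ℝ} (hc : c =O[atTop] (fun _ => (1 : ℝ))) :
    (fun y => ∑' k, c k * y ^ k - (c 0 + c 1 * y)) =O[𝓝 0] (fun y : ℝ => y ^ 2) := by
  set p := FormalMultilinearSeries.ofScalars ℝ c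
  have hradius : 0 < p.radius :=
    one_pos.trans_le <| p.le_radius_of_isBigO (r := 1) <| by
      simpa [p, FormalMultilinearSeries.ofScalars_norm] using hc.norm_left
  refine ((p.hasFPowerSeriesOnBall hradius).hasFPowerSeriesAt.isBigO_sub_partialSum_pow 2).congr
    (fun y => ?_) fun y => by rw [Real.norm_eq_abs, sq_abs]
  simp [p, FormalMultilinearSeries.sum, FormalMultilinearSeries.partialSum,
    Finset.sum_range_succ, mul_comm]

lemma hasEvenExpansion_tsum {c : ℕ → ℝ} (hc : c =O[atTop] (fun _ => (1 : ℝ))) (γ : ℝ) :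
    HasEvenExpansion (fun r => ∑' k, c k * (γ * r) ^ (2 * k)) (c 0) (c 1 * γ ^ 2) := by
  have hlim : Tendsto (fun r : ℝ => (γ * r) ^ 2) (𝓝[>] 0) (𝓝 0) :=
    (Continuous.tendsto' (by fun_prop) 0 0 (by simp)).mono_left nhdsWithin_le_nhds
  have hO : (fun r : ℝ => ((γ * r) ^ 2) ^ 2) =O[𝓝[>] 0] (fun r : ℝ => r ^ 4) :=
    ((isBigO_refl _ _).const_mul_left (γ ^ 4)).congr_left fun r => by ring
  refine (((isBigO_tsum_mul_pow_sub hc).comp_tendsto hlim).trans hO).congr_left fun r => ?_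
  simp only [Function.comp_apply, ← pow_mul]
  ring

lemma hasEvenExpansion_finset_sum {s : Finset ℕ} {c : ℕ → ℝ} (hc : ∀ m ∉ s, c m = 0) :
    HasEvenExpansion (fun r => ∑ m ∈ s, c m * r ^ (2 * m)) (c 0) (c 1) := by
  have hbdd : c =O[atTop] (fun _ => (1 : ℝ)) := by
    refine (isBigO_zero _ _).congr' ?_ EventuallyEq.rfl
    filter_upwards [eventually_gt_atTop (s.sup id)] with m hm
    exact (hc m fun hms => (s.le_sup (f := id) hms).not_gt hm).symm
  convert hasEvenExpansion_tsum hbdd 1 using 2 with r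
  · rw [tsum_eq_sum fun m hm => by rw [hc m hm, zero_mul], one_mul]
  · ring

section Bessel

lemma psiH_nonneg (k : ℕ) : 0 ≤ psiH k := by
  unfold psiH; positivity

lemma psiH_le_factorial (k : ℕ) : psiH k ≤ k.factorial := by
  have hterm : ∀ j ∈ Finset.range k, (1 : ℝ) / (j + 1) ≤ 1 := fun j _ =>
    div_le_one_of_le₀ (by linarith [j.cast_nonneg (α := ℝ)]) (by positivity)
  calc psiH k ≤ k := by simpa [psiH] using Finset.sum_le_card_nsmul _ _ _ hterm
    _ ≤ k.factorial := mod_cast k.self_le_factorial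

lemma psiH_zero : psiH 0 = 0 := rfl

lemma psiH_one : psiH 1 = 1 := by simp [psiH]

lemma psiH_two : psiH 2 = 3 / 2 := by norm_num [psiH, Finset.sum_range_succ]

lemma one_le_cast_factorial (k : ℕ) : (1 : ℝ) ≤ k.factorial :=
  mod_cast k.factorial_pos

lemma hasEvenExpansion_besselI0 (γ : ℝ) :
    HasEvenExpansion (fun r => besselI0 (γ * r)) 1 (γ ^ 2 / 4) := by
  have hc : (fun k : ℕ => 1 / (k.factorial : ℝ) ^ 2) =O[atTop] (fun _ => (1 : ℝ)) :=
    .of_norm_le fun k => by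
      rw [Real.norm_of_nonneg (by positivity)]
      exact div_le_one_of_le₀ (one_le_pow₀ (one_le_cast_factorial k)) (by positivity)
  convert hasEvenExpansion_tsum hc (γ / 2) using 1
  · funext r
    exact tsum_congr fun k => by ring
  · norm_num
  · simp only [Nat.factorial_one, Nat.cast_one]
    ring

lemma hasEvenExpansion_besselS0 (γ : ℝ) :
    HasEvenExpansion (fun r => besselS0 (γ * r)) 0 (γ ^ 2 / 4) := by
  have hc : (fun k : ℕ => psiH k / (k.factorial : ℝ) ^ 2) =O[atTop] (fun _ => (1 : ℝ)) :=
    .of_norm_le fun k => by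
      have hψ := psiH_nonneg k
      rw [Real.norm_of_nonneg (by positivity)]
      refine div_le_one_of_le₀ ((psiH_le_factorial k).trans ?_) (by positivity)
      exact le_self_pow₀ (one_le_cast_factorial k) two_ne_zero
  convert hasEvenExpansion_tsum hc (γ / 2) using 1
  · funext r
    exact tsum_congr fun k => by ring
  · norm_num [psiH_zero]
  · simp only [psiH_one, Nat.factorial_one, Nat.cast_one]
    ring

lemma hasEvenExpansion_besselI1_div (γ : ℝ) :
    HasEvenExpansion (fun r => besselI1 (γ * r) / r) (γ / 2) (γ ^ 3 / 16) := by
  have hc : (fun k : ℕ => 1 / ((k.factorial : ℝ) * (k + 1).factorial)) =O[atTop]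
      (fun _ => (1 : ℝ)) :=
    .of_norm_le fun k => by
      rw [Real.norm_of_nonneg (by positivity)]
      exact div_le_one_of_le₀ (one_le_mul_of_one_le_of_one_le (one_le_cast_factorial k)
        (one_le_cast_factorial _)) (by positivity)
  convert ((hasEvenExpansion_tsum hc (γ / 2)).const_mul (γ / 2)).congr fun r hr => ?_ using 1
  · norm_num
  · simp only [Nat.factorial_one, Nat.reduceAdd, Nat.factorial_two]
    push_cast
    ring
  · rw [div_eq_iff hr.ne', besselI1, ← tsum_mul_left, ← tsum_mul_right]
    exact tsum_congr fun k => by ring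

lemma hasEvenExpansion_besselS1_div (γ : ℝ) :
    HasEvenExpansion (fun r => besselS1 (γ * r) / r) (-γ / 4) (-5 * γ ^ 3 / 64) := by
  have hc : (fun k : ℕ => (psiH (k + 1) + psiH k) / ((k.factorial : ℝ) * (k + 1).factorial))
      =O[atTop] (fun _ => (1 : ℝ)) := by
    refine .of_bound 2 (.of_forall fun k => ?_)
    have hψ := psiH_nonneg k
    have hψ' := psiH_nonneg (k + 1)
    rw [Real.norm_of_nonneg (by positivity), norm_one, div_le_iff₀ (by positivity)]
    have hk : psiH k ≤ k.factorial * (k + 1).factorial :=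
      (psiH_le_factorial k).trans
        (le_mul_of_one_le_right (by positivity) (one_le_cast_factorial _))
    have hk' : psiH (k + 1) ≤ k.factorial * (k + 1).factorial :=
      (psiH_le_factorial (k + 1)).trans
        (le_mul_of_one_le_left (by positivity) (one_le_cast_factorial k))
    linarith
  convert ((hasEvenExpansion_tsum hc (γ / 2)).const_mul (-γ / 4)).congr fun r hr => ?_ using 1
  · norm_num [psiH_zero, psiH_one]
  · simp only [psiH_one, psiH_two, Nat.factorial_one, Nat.reduceAdd, Nat.factorial_two]
    push_cast
    ring
  · rw [div_eq_iff hr.ne', besselS1, ← tsum_mul_left, ← tsum_mul_left, ← tsum_mul_right]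
    exact tsum_congr fun k => by ring

/-- The constant `Lγ = C + ln(γ/2)` in the expansion of the Macdonald functions at `0`. -/
noncomputable def besselKShift (γ : ℝ) : ℝ :=
  Real.eulerMascheroniConstant + Real.log (γ / 2)

/-- The part of the Macdonald function `K₀` that is free of `ln r`:
`K₀(γr) = -ln r · I₀(γr) + besselK0Reg γ r`. -/
noncomputable def besselK0Reg (γ r : ℝ) : ℝ :=
  -besselKShift γ * besselI0 (γ * r) + besselS0 (γ * r)

/-- The part of the Macdonald function `K₁` that is free of `ln r`:
`K₁(γr) = ln r · I₁(γr) + besselK1Reg γ r`. It keeps the pole at `0`. -/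
noncomputable def besselK1Reg (γ r : ℝ) : ℝ :=
  1 / (γ * r) + besselKShift γ * besselI1 (γ * r) + besselS1 (γ * r)

lemma phiHat_eq (γ : ℝ) (n : ℕ) (r : ℝ) :
    phiHat γ n r = besselK0Reg γ r * vPol γ n r + besselK1Reg γ r * wPol γ n r := rfl

lemma phiHatTil_eq (γ : ℝ) (n : ℕ) (r : ℝ) :
    phiHatTil γ n r = besselK0Reg γ r * vTil γ n r + besselK1Reg γ r * wTil γ n r := rfl

lemma hasEvenExpansion_besselK0Reg (γ : ℝ) :
    HasEvenExpansion (besselK0Reg γ) (-besselKShift γ) ((1 - besselKShift γ) * γ ^ 2 / 4) := by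
  convert ((hasEvenExpansion_besselI0 γ).const_mul (-besselKShift γ)).add
    (hasEvenExpansion_besselS0 γ) using 1
  · rfl
  · ring
  · ring

lemma hasEvenExpansion_mul_besselK1Reg (γ : ℝ) :
    HasEvenExpansion (fun r => r * besselK1Reg γ r) (1 / γ)
      (besselKShift γ * γ / 2 - γ / 4) := by
  have hlog := ((hasEvenExpansion_besselI1_div γ).const_mul (besselKShift γ)).add
    (hasEvenExpansion_besselS1_div γ)
  convert ((HasEvenExpansion.const (1 / γ)).add (HasEvenExpansion.sq.mul hlog)).congr
    fun r hr => ?_ using 1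
  · ring
  · ring
  · rw [besselK1Reg]
    field_simp
    ring

lemma HasEvenExpansion.besselKReg_mul_add {V W : ℝ → ℝ} {v₀ v₁ w₀ w₁ : ℝ} (γ : ℝ)
    (hV : HasEvenExpansion V v₀ v₁) (hW : HasEvenExpansion (fun r => W r / r) w₀ w₁) :
    HasEvenExpansion (fun r => besselK0Reg γ r * V r + besselK1Reg γ r * W r)
      (-besselKShift γ * v₀ + 1 / γ * w₀)
      ((-besselKShift γ * v₁ + (1 - besselKShift γ) * γ ^ 2 / 4 * v₀)
        + (1 / γ * w₁ + (besselKShift γ * γ / 2 - γ / 4) * w₀)) := by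
  refine (((hasEvenExpansion_besselK0Reg γ).mul hV).add
    ((hasEvenExpansion_mul_besselK1Reg γ).mul hW)).congr fun r hr => ?_
  field_simp

end Bessel

section Coefficients

lemma acoef_zero_right (γ : ℝ) (n : ℕ) : acoef γ n 0 = 1 := by
  rw [acoef, if_pos rfl]

lemma acoef_of_lt (γ : ℝ) {n m : ℕ} (h : n < m) : acoef γ n m = 0 := by
  rw [acoef, if_neg (Nat.ne_zero_of_lt h), if_pos h]

lemma acoef_succ_self (γ : ℝ) (n : ℕ) :
    acoef γ (n + 1) (n + 1) = -(γ / ((n + 1 : ℕ) : ℝ)) * acoef γ n n := by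
  rw [acoef, if_neg n.succ_ne_zero, if_neg (lt_irrefl _), if_pos rfl, Nat.add_sub_cancel]

lemma acoef_succ_right_of_lt (γ : ℝ) {n m : ℕ} (h : m + 1 < n) :
    acoef γ n (m + 1) = 1 / (2 * γ * ((m + 1 : ℕ) : ℝ)) *
      (4 * (((m + 2) / 2 : ℕ) : ℝ) ^ 2 * acoef γ n (m + 2)
        - γ ^ 2 * ∑ k ∈ Finset.Icc m (n - 1), ((n - k + 1 : ℕ) : ℝ) * acoef γ k m) := by
  rw [acoef, if_neg m.succ_ne_zero, if_neg h.not_gt, if_neg h.ne,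
    Finset.sum_attach (Finset.Icc (m + 1 - 1) (n - 1))
      (fun k => ((n - k + 1 : ℕ) : ℝ) * acoef γ k (m + 1 - 1)), Nat.add_sub_cancel]

lemma acoef_eq_pow_mul {γ : ℝ} (hγ : γ ≠ 0) (n m : ℕ) :
    acoef γ n m = γ ^ m * acoef 1 n m := by
  rcases lt_trichotomy n m with h | rfl | h
  · rw [acoef_of_lt γ h, acoef_of_lt 1 h, mul_zero]
  · cases n with
    | zero => rw [acoef_zero_right, acoef_zero_right, pow_zero, one_mul]
    | succ n =>
      rw [acoef_succ_self, acoef_succ_self, acoef_eq_pow_mul hγ n n]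
      ring
  · cases m with
    | zero => rw [acoef_zero_right, acoef_zero_right, pow_zero, one_mul]
    | succ m =>
      have hsum : ∑ k ∈ Finset.Icc m (n - 1), ((n - k + 1 : ℕ) : ℝ) * acoef γ k m
          = γ ^ m * ∑ k ∈ Finset.Icc m (n - 1), ((n - k + 1 : ℕ) : ℝ) * acoef 1 k m := by
        rw [Finset.mul_sum]
        refine Finset.sum_congr rfl fun k hk => ?_
        have : k < n := by grind
        rw [acoef_eq_pow_mul hγ k m]
        ring
      rw [acoef_succ_right_of_lt γ h, acoef_succ_right_of_lt 1 h, hsum,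
        acoef_eq_pow_mul hγ n (m + 2)]
      field_simp
      ring
termination_by (n, n - m)

lemma sum_range_sub_add_one (n : ℕ) :
    ∑ k ∈ Finset.range n, ((n - k + 1 : ℕ) : ℝ) = n * (n + 3) / 2 := by
  induction n with
  | zero => simp
  | succ n ih =>
    rw [Finset.sum_range_succ']
    simp only [Nat.add_sub_add_right, Nat.sub_zero, ih]
    push_cast
    ring

lemma acoef_two {γ : ℝ} (hγ : γ ≠ 0) (n : ℕ) :
    acoef γ n 2 = γ * acoef γ n 1 / 2 + γ ^ 2 * (n * (n + 3)) / 8 := by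
  match n with
  | 0 => simp [acoef_of_lt]
  | 1 =>
    rw [acoef_of_lt γ one_lt_two, acoef_succ_self γ 0, acoef_zero_right]
    push_cast
    ring
  | n + 2 =>
    have hsum : ∑ k ∈ Finset.Icc 0 (n + 2 - 1), ((n + 2 - k + 1 : ℕ) : ℝ) * acoef γ k 0
        = (n + 2 : ℕ) * ((n + 2 : ℕ) + 3) / 2 := by
      rw [← sum_range_sub_add_one, Finset.range_eq_Ico]
      exact Finset.sum_congr (by grind) fun k _ => by rw [acoef_zero_right, mul_one]
    rw [acoef_succ_right_of_lt γ (m := 0) (by omega), hsum]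
    simp only [zero_add, Nat.reduceDiv]
    push_cast
    field_simp
    ring

end Coefficients

section Polynomials

lemma hasEvenExpansion_sum_acoef_even (γ : ℝ) (n : ℕ) :
    HasEvenExpansion (fun r => ∑ m ∈ Finset.range (n / 2 + 1), acoef γ n (2 * m) * r ^ (2 * m))
      1 (acoef γ n 2) := by
  simpa only [mul_zero, mul_one, acoef_zero_right] using
    hasEvenExpansion_finset_sum (s := Finset.range (n / 2 + 1)) (c := fun m => acoef γ n (2 * m))
      fun m hm => acoef_of_lt γ (by grind)

lemma hasEvenExpansion_sum_acoef_odd (γ : ℝ) (n : ℕ) :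
    HasEvenExpansion
      (fun r => ∑ m ∈ Finset.range ((n - 1) / 2 + 1), acoef γ n (2 * m + 1) * r ^ (2 * m))
      (acoef γ n 1) (acoef γ n 3) :=
  hasEvenExpansion_finset_sum (c := fun m => acoef γ n (2 * m + 1))
    fun m hm => acoef_of_lt γ (by grind)

lemma hasEvenExpansion_vPol (γ : ℝ) (n : ℕ) : HasEvenExpansion (vPol γ n) 1 (acoef γ n 2) :=
  hasEvenExpansion_sum_acoef_even γ n

lemma hasEvenExpansion_wPol_div (γ : ℝ) (n : ℕ) :
    HasEvenExpansion (fun r => wPol γ n r / r) (acoef γ n 1) (acoef γ n 3) := by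
  refine (hasEvenExpansion_sum_acoef_odd γ n).congr fun r hr => ?_
  rw [div_eq_iff hr.ne', wPol, Finset.sum_mul]
  exact Finset.sum_congr rfl fun m _ => by ring

lemma hasEvenExpansion_vTil (γ : ℝ) (n : ℕ) :
    HasEvenExpansion (vTil γ n) 0 (2 * acoef γ n 2 - γ * acoef γ n 1) := by
  have heven := hasEvenExpansion_finset_sum (s := Finset.Icc 1 (n / 2))
    (c := fun m => m * acoef γ n (2 * m)) fun m hm => by
      rcases m.eq_zero_or_pos with rfl | hpos
      · simp
      · rw [acoef_of_lt γ (by grind), mul_zero]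
  have hodd := HasEvenExpansion.sq.mul (hasEvenExpansion_sum_acoef_odd γ n)
  convert ((heven.const_mul 2).sub (hodd.const_mul γ)).congr fun r _ => ?_ using 1
  · simp
  · simp
  · rw [vTil, Finset.mul_sum _ _ (r ^ 2)]
    congr 2
    exact Finset.sum_congr rfl fun m _ => by ring

lemma hasEvenExpansion_wTil_div (γ : ℝ) (n : ℕ) :
    HasEvenExpansion (fun r => wTil γ n r / r) (-γ) (2 * acoef γ n 3 - γ * acoef γ n 2) := by
  have hodd := hasEvenExpansion_finset_sum (s := Finset.Icc 1 ((n - 1) / 2))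
    (c := fun m => m * acoef γ n (2 * m + 1)) fun m hm => by
      rcases m.eq_zero_or_pos with rfl | hpos
      · simp
      · rw [acoef_of_lt γ (by grind), mul_zero]
  have heven := hasEvenExpansion_sum_acoef_even γ n
  convert ((hodd.const_mul 2).sub (heven.const_mul γ)).congr fun r hr => ?_ using 1
  · simp
  · simp
  · rw [div_eq_iff hr.ne', wTil, sub_mul, mul_assoc 2, mul_assoc γ, Finset.sum_mul, Finset.sum_mul]
    congr 2 <;> exact Finset.sum_congr rfl fun m _ => by ring

end Polynomials

lemma isBigO_phiHatTil_add_one {γ : ℝ} (hγ : γ ≠ 0) (n : ℕ) :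
    (fun r => phiHatTil γ n r + 1) =O[𝓝[>] 0] (fun r : ℝ => r ^ 2) := by
  have h := (hasEvenExpansion_vTil γ n).besselKReg_mul_add γ (hasEvenExpansion_wTil_div γ n)
  refine h.isBigO_sub.congr_left fun r => ?_
  rw [phiHatTil_eq]
  field_simp
  ring

lemma hasEvenExpansion_phiHatTil_sub_two_mul_phiHat {γ : ℝ} (hγ : γ ≠ 0) (n : ℕ) :
    HasEvenExpansion (fun r => phiHatTil γ n r - 2 * phiHat γ n r)
      (2 * besselKShift γ - 1 - 2 * acoef 1 n 1) (-γ ^ 2 * ((n + 1) * (n + 2)) / 8) := by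
  have hV := (hasEvenExpansion_vTil γ n).sub ((hasEvenExpansion_vPol γ n).const_mul 2)
  have hW := (hasEvenExpansion_wTil_div γ n).sub ((hasEvenExpansion_wPol_div γ n).const_mul 2)
  have hW' : HasEvenExpansion (fun r => (wTil γ n r - 2 * wPol γ n r) / r) _ _ :=
    hW.congr fun r _ => by ring
  convert (hV.besselKReg_mul_add γ hW').congr fun r _ => ?_ using 1
  · rw [acoef_eq_pow_mul hγ n 1]
    field_simp
    ring
  · rw [acoef_two hγ]
    field_simp
    ring
  · rw [phiHat_eq, phiHatTil_eq]
    ring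

lemma HasEvenExpansion.sumChi {F : ℕ → ℝ → ℝ} {A B : ℕ → ℝ} (n : ℕ)
    (h : ∀ j, HasEvenExpansion (F j) (A j) (B j)) :
    HasEvenExpansion (fun r => sumChi n fun j => F j r) (sumChi n A) (sumChi n B) := by
  refine HasEvenExpansion.sum fun k _ => ?_
  split_ifs
  · exact (h _).const_mul _
  · exact .const 0

lemma chiC_eq_zero_of_add_neg {n : ℕ} {k : ℤ} (h : (n : ℤ) + k < 0) : chiC n k = 0 := by
  have hcases : (k = -2 ∧ (n = 0 ∨ n = 1)) ∨ (k = -1 ∧ n = 0) ∨ k < -2 := by omega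
  rcases hcases with ⟨rfl, rfl | rfl⟩ | ⟨rfl, rfl⟩ | hk
  · simp [chiC]
  · simp [chiC]
  · simp [chiC]
  · simp [chiC, show k ≠ -2 by omega, show k ≠ -1 by omega, show k ≠ 0 by omega,
      show k ≠ 1 by omega, show k ≠ 2 by omega]

lemma sumChi_comp_natCast (n : ℕ) (q : ℝ → ℝ) :
    sumChi n (fun j => q j) = ∑ k ∈ Finset.Icc (-2 : ℤ) 2, chiC n k * q (n + k) := by
  refine Finset.sum_congr rfl fun k _ => ?_
  split_ifs with hk
  · have hcast : ((((n : ℤ) + k).toNat : ℕ) : ℝ) = n + k := by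
      exact_mod_cast congrArg (Int.cast (R := ℝ)) (Int.toNat_of_nonneg hk)
    exact congrArg (fun x => chiC n k * q x) hcast
  · rw [chiC_eq_zero_of_add_neg (not_le.1 hk), zero_mul]

lemma sumChi_quadratic (n : ℕ) (a b c : ℝ) :
    sumChi n (fun j => a + b * j + c * j ^ 2) = 4 * c := by
  have hsum (F : ℤ → ℝ) :
      ∑ k ∈ Finset.Icc (-2 : ℤ) 2, F k = F (-2) + F (-1) + F 0 + F 1 + F 2 := by
    rw [show Finset.Icc (-2 : ℤ) 2 = {-2, -1, 0, 1, 2} from rfl]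
    simp [add_assoc]
  rw [sumChi_comp_natCast n fun x => a + b * x + c * x ^ 2, hsum]
  simp only [chiC, Int.reduceNeg, Int.reduceEq, ↓reduceIte]
  push_cast
  ring

lemma hasEvenExpansion_sumChi_phiHatTil_sub {γ δ : ℝ} (hγ : γ ≠ 0) (hδ : δ ≠ 0) (n : ℕ) :
    HasEvenExpansion
      (fun r => sumChi n fun j =>
        phiHatTil γ j r - 2 * phiHat γ j r + 2 * phiHat δ j r - phiHatTil δ j r)
      0 ((δ ^ 2 - γ ^ 2) / 2) := by
  have hsum := HasEvenExpansion.sumChi n fun j =>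
    (hasEvenExpansion_phiHatTil_sub_two_mul_phiHat hγ j).sub
      (hasEvenExpansion_phiHatTil_sub_two_mul_phiHat hδ j)
  convert hsum using 1
  · funext r
    congr 1 with j
    ring
  · rw [← mul_zero 4, ← sumChi_quadratic n (2 * (besselKShift γ - besselKShift δ)) 0 0]
    congr 1 with j
    ring
  · set e := (δ ^ 2 - γ ^ 2) / 8 with he
    rw [show (δ ^ 2 - γ ^ 2) / 2 = 4 * e by rw [he]; ring, ← sumChi_quadratic n (2 * e) (3 * e) e]
    congr 1 with j
    rw [he]
    ring

lemma isBigO_xiTil_sub {κ cs cp : ℝ} (hκ : κ ≠ 0) (hcs : cs ≠ 0) (hcp : cp ≠ 0) (ℓ n : ℕ) :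
    (fun r => xiTil κ cs cp ℓ n r - ((-(ℓ : ℝ)) ^ (ℓ - 1) * (1 / cp ^ 2 - 1 / cs ^ 2) / 2
      - (-1) ^ (ℓ - 1) / cp ^ 2 - (ℓ - 1) / cs ^ 2)) =O[𝓝[>] 0] (fun r : ℝ => r ^ 2) := by
  have hγs : κ / cs ≠ 0 := div_ne_zero hκ hcs
  have hγp : κ / cp ≠ 0 := div_ne_zero hκ hcp
  have hsum := (hasEvenExpansion_sumChi_phiHatTil_sub hγs hγp n).isBigO_div_sq_sub
  have hp := isBigO_phiHatTil_add_one hγp n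
  have hs := isBigO_phiHatTil_add_one hγs n
  refine (((hsum.const_mul_left ((-(ℓ : ℝ)) ^ (ℓ - 1) / κ ^ 2)).add
    (hp.const_mul_left ((-1) ^ (ℓ - 1) / cp ^ 2))).add
    (hs.const_mul_left ((ℓ - 1) / cs ^ 2))).congr_left fun r => ?_
  rw [xiTil]
  generalize sumChi n _ = S
  field_simp
  ring

/-- ξ̃_{2,n}(r) = O(r²) as r → 0⁺. -/
theorem xiTil_two_asymptotics (κ cs cp : ℝ) (hκ : 0 < κ) (hcs : 0 < cs) (hcp : 0 < cp) (n : ℕ) :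
    (∃ ε > (0 : ℝ), ∃ M > (0 : ℝ), ∀ r : ℝ, 0 < r → r < ε →
      |xiTil κ cs cp 2 n r| ≤ M * r ^ 2) ∧
    Tendsto (fun r => xiTil κ cs cp 2 n r) (nhdsWithin 0 (Set.Ioi 0)) (nhds 0) := by
  have hO : (fun r => xiTil κ cs cp 2 n r) =O[𝓝[>] 0] (fun r : ℝ => r ^ 2) :=
    (isBigO_xiTil_sub hκ.ne' hcs.ne' hcp.ne' 2 n).congr_left fun r => by
      simp only [Nat.cast_ofNat, Nat.add_one_sub_one, pow_one]
      ring
  constructor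
  · obtain ⟨M, hM, hbound⟩ := hO.exists_pos
    obtain ⟨ε, hε, hsub⟩ := mem_nhdsGT_iff_exists_Ioo_subset.1 hbound.bound
    refine ⟨ε, hε, M, hM, fun r hr hrε => ?_⟩
    simpa using hsub ⟨hr, hrε⟩
  · have hsq : Tendsto (fun r : ℝ => r ^ 2) (𝓝[>] 0) (𝓝 0) :=
      ((continuous_pow 2).tendsto' 0 0 (zero_pow two_ne_zero)).mono_left nhdsWithin_le_nhds
    exact hO.trans_tendsto hsq
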